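/- Reparametrization formula for (p,q)-Bernstein basis functions: let n ≥ 1, let p, q be reals with 0 < q < p, and let 0 ≤ k ≤ n. Then for all reals r and t, B_k^n(rt;p,q) = Σ_{i=k}^{n} B_k^i(r;p,q) B_i^n(t;p,q). -/

import Mathlib

/-- The (p,q)-integer `[n]_{p,q} = Σ_{j=0}^{n-1} p^{n-1-j} q^j`. -/
noncomputable def pqInt (p q : ℝ) (n : ℕ) : ℝ :=
  ∑ j ∈ Finset.range n, p ^ (n - 1 - j) * q ^ j

/-- The (p,q)-factorial `[n]_{p,q}! = ∏_{j=1}^{n} [j]_{p,q}`. -/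
noncomputable def pqFact (p q : ℝ) : ℕ → ℝ
  | 0 => 1
  | n + 1 => pqFact p q n * pqInt p q (n + 1)

/-- The (p,q)-binomial coefficient `[n choose k]_{p,q}`. -/
noncomputable def pqBinom (p q : ℝ) (n k : ℕ) : ℝ :=
  pqFact p q n / (pqFact p q k * pqFact p q (n - k))

/-- The (p,q)-Bernstein basis function
`B_k^n(t;p,q) = p^{k(k-1)/2 - n(n-1)/2} [n choose k]_{p,q} t^k ∏_{s=0}^{n-k-1} (p^s - q^s t)`. -/
noncomputable def pqBernstein (p q : ℝ) (n k : ℕ) (t : ℝ) : ℝ :=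
  p ^ (k * (k - 1) / 2) / p ^ (n * (n - 1) / 2) * pqBinom p q n k * t ^ k *
    ∏ s ∈ Finset.range (n - k), (p ^ s - q ^ s * t)

/-!
Write `(a ⊖ b)^m = ∏_{s<m} (p^s a - q^s b)`. For `i + j = m` the last factor of `(a ⊖ c)^(m+1)`
splits as `p^m a - q^m c = p^i (p^j a - q^j b) + q^j (p^i b - q^i c)`, in parallel with
`[i + j] = p^i [j] + q^j [i]`; by induction the divided powers `D_m(a, b) = (a ⊖ b)^m / [m]!`
satisfy the addition rule `D_m(a, c) = ∑_{i+j=m} D_i(b, c) D_j(a, b)`. The Bernstein functions are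
`B_k^n(t) = (c_n / c_k) t^k D_{n-k}(1, t)` with `c_n = [n]! / p^(n(n-1)/2)`. In the sum over `i` the
`c_i` cancel, and `t^(i-k) D_{i-k}(1, r) = D_{i-k}(t, rt)` turns the claim into the addition rule
for the points `1`, `t`, `rt`.
-/

open Finset

section PQInt

variable {p q : ℝ}

lemma pqInt_zero : pqInt p q 0 = 0 := by
  simp [pqInt]

lemma pqInt_succ (n : ℕ) : pqInt p q (n + 1) = p * pqInt p q n + q ^ n := by
  have h := geom_sum₂_succ_eq q p (n := n)
  simp only [pqInt, mul_comm (p ^ _) (q ^ _)]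
  exact h.trans (add_comm _ _)

lemma pqInt_add (i j : ℕ) : pqInt p q (i + j) = p ^ i * pqInt p q j + q ^ j * pqInt p q i := by
  induction i with
  | zero => simp [pqInt_zero]
  | succ i ih =>
    rw [Nat.add_right_comm, pqInt_succ, pqInt_succ, ih]
    ring

lemma pqInt_ne_zero (hp : p ≠ 0) (hpq : p + q ≠ 0) {n : ℕ} (hn : n ≠ 0) : pqInt p q n ≠ 0 := by
  have hfactor : pqInt p q n = p ^ (n - 1) * ∑ j ∈ range n, (q / p) ^ j := by
    rw [pqInt, mul_sum]
    refine sum_congr rfl fun j hj => ?_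
    have hjn : j ≤ n - 1 := Nat.le_sub_one_of_lt (mem_range.1 hj)
    rw [pow_sub₀ p hp hjn, div_pow, mul_assoc, inv_mul_eq_div]
  have hratio : q / p ≠ -1 := fun h => hpq <| by
    rw [div_eq_iff hp] at h
    linarith
  rw [hfactor]
  exact mul_ne_zero (pow_ne_zero _ hp) (geom_sum_ne_zero hratio hn)

lemma pqFact_ne_zero (hp : p ≠ 0) (hpq : p + q ≠ 0) (n : ℕ) : pqFact p q n ≠ 0 := by
  induction n with
  | zero => exact one_ne_zero
  | succ n ih => exact mul_ne_zero ih (pqInt_ne_zero hp hpq n.succ_ne_zero)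

end PQInt

/-- The divided (p,q)-power `(a ⊖ b)^m / [m]_{p,q}!`, where
`(a ⊖ b)^m = ∏_{s=0}^{m-1} (p^s a - q^s b)`. Dividing by the factorial removes the binomial
coefficients from its addition rule. -/
noncomputable def pqDividedPow (p q a b : ℝ) (m : ℕ) : ℝ :=
  (∏ s ∈ range m, (p ^ s * a - q ^ s * b)) / pqFact p q m

section PQDividedPow

variable {p q : ℝ}

lemma pqDividedPow_zero (a b : ℝ) : pqDividedPow p q a b 0 = 1 := by
  simp [pqDividedPow, pqFact]

lemma pqInt_mul_pqDividedPow_succ (hp : p ≠ 0) (hpq : p + q ≠ 0) (a b : ℝ) (m : ℕ) :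
    pqInt p q (m + 1) * pqDividedPow p q a b (m + 1) =
      pqDividedPow p q a b m * (p ^ m * a - q ^ m * b) := by
  have hint : pqInt p q (m + 1) ≠ 0 := pqInt_ne_zero hp hpq m.succ_ne_zero
  rw [pqDividedPow, pqDividedPow, prod_range_succ, pqFact, mul_div_assoc', mul_comm (pqInt p q _),
    mul_div_mul_right _ _ hint, div_mul_eq_mul_div]

lemma pqDividedPow_mul_mul (c a b : ℝ) (m : ℕ) :
    pqDividedPow p q (c * a) (c * b) m = c ^ m * pqDividedPow p q a b m := by
  simp only [pqDividedPow, mul_left_comm _ c, ← mul_sub, prod_mul_distrib, prod_const, card_range,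
    mul_div_assoc]

lemma pqInt_mul_sum_pqDividedPow_succ (hp : p ≠ 0) (hpq : p + q ≠ 0) (a b c : ℝ) (m : ℕ) :
    pqInt p q (m + 1) * ∑ x ∈ antidiagonal (m + 1),
        pqDividedPow p q b c x.1 * pqDividedPow p q a b x.2 =
      (∑ x ∈ antidiagonal m, pqDividedPow p q b c x.1 * pqDividedPow p q a b x.2) *
        (p ^ m * a - q ^ m * c) := by
  let D := pqDividedPow p q
  have hint : ∀ x ∈ antidiagonal (m + 1), pqInt p q (m + 1) * (D b c x.1 * D a b x.2) =
      p ^ x.1 * D b c x.1 * (pqInt p q x.2 * D a b x.2) +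
        q ^ x.2 * (pqInt p q x.1 * D b c x.1) * D a b x.2 := fun x hx => by
    rw [← mem_antidiagonal.1 hx, pqInt_add]
    ring
  have hfactor : ∀ x ∈ antidiagonal m, p ^ m * a - q ^ m * c =
      p ^ x.1 * (p ^ x.2 * a - q ^ x.2 * b) + q ^ x.2 * (p ^ x.1 * b - q ^ x.1 * c) :=
    fun x hx => by
      rw [← mem_antidiagonal.1 hx]
      ring
  calc pqInt p q (m + 1) * ∑ x ∈ antidiagonal (m + 1), D b c x.1 * D a b x.2
      = ∑ x ∈ antidiagonal (m + 1), p ^ x.1 * D b c x.1 * (pqInt p q x.2 * D a b x.2) +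
        ∑ x ∈ antidiagonal (m + 1), q ^ x.2 * (pqInt p q x.1 * D b c x.1) * D a b x.2 := by
        rw [mul_sum, sum_congr rfl hint, sum_add_distrib]
    _ = ∑ x ∈ antidiagonal m, p ^ x.1 * D b c x.1 * (D a b x.2 * (p ^ x.2 * a - q ^ x.2 * b)) +
        ∑ x ∈ antidiagonal m, q ^ x.2 * (D b c x.1 * (p ^ x.1 * b - q ^ x.1 * c)) * D a b x.2 := by
        rw [Nat.sum_antidiagonal_succ', Nat.sum_antidiagonal_succ]
        simp only [D, pqInt_zero, pqInt_mul_pqDividedPow_succ hp hpq, zero_mul, mul_zero, zero_add]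
    _ = (∑ x ∈ antidiagonal m, D b c x.1 * D a b x.2) * (p ^ m * a - q ^ m * c) := by
        rw [← sum_add_distrib, sum_mul]
        refine sum_congr rfl fun x hx => ?_
        rw [hfactor x hx]
        ring

lemma pqDividedPow_eq_sum_antidiagonal (hp : p ≠ 0) (hpq : p + q ≠ 0) (a b c : ℝ) (m : ℕ) :
    pqDividedPow p q a c m =
      ∑ x ∈ antidiagonal m, pqDividedPow p q b c x.1 * pqDividedPow p q a b x.2 := by
  induction m with
  | zero => simp [pqDividedPow_zero]
  | succ m ih =>
    apply mul_left_cancel₀ (pqInt_ne_zero hp hpq m.succ_ne_zero)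
    rw [pqInt_mul_pqDividedPow_succ hp hpq, ih, pqInt_mul_sum_pqDividedPow_succ hp hpq]

lemma pqDividedPow_sub_eq_sum_Icc (hp : p ≠ 0) (hpq : p + q ≠ 0) (a b c : ℝ) {k n : ℕ}
    (hk : k ≤ n) :
    pqDividedPow p q a c (n - k) =
      ∑ i ∈ Icc k n, pqDividedPow p q b c (i - k) * pqDividedPow p q a b (n - i) := by
  rw [pqDividedPow_eq_sum_antidiagonal hp hpq a b c,
    Nat.sum_antidiagonal_eq_sum_range_succ_mk, ← Ico_add_one_right_eq_Icc, sum_Ico_eq_sum_range,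
    Nat.succ_eq_add_one, Nat.sub_add_comm hk]
  simp only [Nat.add_sub_cancel_left, Nat.sub_sub]

end PQDividedPow

/-- The constant `c_n = [n]_{p,q}! / p^{n(n-1)/2}`: the coefficient of `B_k^n(t;p,q)` relative to
`t^k` times a divided (p,q)-power is `c_n / c_k`. -/
noncomputable def pqBernsteinScale (p q : ℝ) (n : ℕ) : ℝ :=
  pqFact p q n / p ^ (n * (n - 1) / 2)

section PQBernstein

variable {p q : ℝ}

lemma pqBernsteinScale_ne_zero (hp : p ≠ 0) (hpq : p + q ≠ 0) (n : ℕ) :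
    pqBernsteinScale p q n ≠ 0 :=
  div_ne_zero (pqFact_ne_zero hp hpq n) (pow_ne_zero _ hp)

lemma pqBernstein_eq_scale_mul_pqDividedPow (n k : ℕ) (t : ℝ) :
    pqBernstein p q n k t = pqBernsteinScale p q n / pqBernsteinScale p q k *
      (t ^ k * pqDividedPow p q 1 t (n - k)) := by
  simp only [pqBernstein, pqBinom, pqBernsteinScale, pqDividedPow, mul_one]
  rw [div_div_div_eq]
  ring

lemma pqBernstein_mul_pqBernstein (hp : p ≠ 0) (hpq : p + q ≠ 0) (n : ℕ) {i k : ℕ} (hki : k ≤ i)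
    (r t : ℝ) :
    pqBernstein p q i k r * pqBernstein p q n i t =
      pqBernsteinScale p q n / pqBernsteinScale p q k * ((r * t) ^ k *
        (pqDividedPow p q t (r * t) (i - k) * pqDividedPow p q 1 t (n - i))) := by
  have hhom : pqDividedPow p q t (r * t) (i - k) = t ^ (i - k) * pqDividedPow p q 1 r (i - k) := by
    simpa only [mul_one, mul_comm t r] using pqDividedPow_mul_mul t 1 r (i - k)
  have hscale : pqBernsteinScale p q n / pqBernsteinScale p q k =
      pqBernsteinScale p q n / pqBernsteinScale p q i *
        (pqBernsteinScale p q i / pqBernsteinScale p q k) :=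
    (div_mul_div_cancel₀ (pqBernsteinScale_ne_zero hp hpq i)).symm
  rw [pqBernstein_eq_scale_mul_pqDividedPow, pqBernstein_eq_scale_mul_pqDividedPow, hhom, hscale,
    mul_pow, ← pow_mul_pow_sub t hki]
  ring

theorem pqBernstein_reparametrization_general (hp : p ≠ 0) (hpq : p + q ≠ 0) {n k : ℕ}
    (hk : k ≤ n) (r t : ℝ) :
    pqBernstein p q n k (r * t) =
      ∑ i ∈ Icc k n, pqBernstein p q i k r * pqBernstein p q n i t := by
  rw [pqBernstein_eq_scale_mul_pqDividedPow, pqDividedPow_sub_eq_sum_Icc hp hpq 1 t (r * t) hk,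
    mul_sum, mul_sum]
  exact sum_congr rfl fun i hi =>
    (pqBernstein_mul_pqBernstein hp hpq n (mem_Icc.1 hi).1 r t).symm

end PQBernstein

/-- reparametrization formula for (p,q)-Bernstein basis functions:
`B_k^n(rt;p,q) = Σ_{i=k}^{n} B_k^i(r;p,q) B_i^n(t;p,q)`. -/
theorem pqBernstein_reparametrization (n k : ℕ) (hn : 1 ≤ n) (hk : k ≤ n)
    (p q : ℝ) (h0 : 0 < q) (hqp : q < p) (r t : ℝ) :
    pqBernstein p q n k (r * t) =
      ∑ i ∈ Finset.Icc k n, pqBernstein p q i k r * pqBernstein p q n i t :=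
  have hp : 0 < p := h0.trans hqp
  pqBernstein_reparametrization_general hp.ne' (add_pos hp h0).ne' hk r t
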